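/- Let n ∈ (0, 2), μ = 3/n, T > 0, and let φ : ℝ → ℝ be a nonconstant T-periodic function of class C² with φ'' locally absolutely continuous, having only finitely many zeros in [0, T), and satisfying φ''' + 3(μ−1)φ'' + (3μ²−6μ+2)φ' + μ(μ−1)(μ−2)φ + |φ|^{−n}φ = 0 at every point where φ ≠ 0. Then ∫₀ᵀ (φ''(s))² ds = (3μ² − 6μ + 2) ∫₀ᵀ (φ'(s))² ds; in particular 3μ² − 6μ + 2 > 0, which is equivalent to n < 9/(3+√3). -/

import Mathlib

open MeasureTheory intervalIntegral

/-!
Off the zero set of `φ` the energy `E = φ'' φ' + a/2 φ'² + V(φ)` satisfies `E' = φ''² - b φ'²`.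
The equation says nothing at the zeros, but there `V(φ)` is constant: along the zero set `E` still
has derivative `φ''² - b φ'²`, because a zero of `φ` is isolated unless `φ'` vanishes there. By
Sard's lemma a continuous function on the line whose derivative vanishes along a set and along its
complement has a null range, hence is constant. So `E` is a primitive of `φ''² - b φ'²`, and
periodicity of `E` gives the identity, however many zeros `φ` has.
-/

open Set Filter

section Calculus

theorem eq_of_continuous_of_volume_range_eq_zero {F : ℝ → ℝ} (hF : Continuous F)
    (hnull : volume (range F) = 0) (x y : ℝ) : F x = F y := by
  have hsub : uIcc (F y) (F x) ⊆ range F :=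
    (isPreconnected_range hF).ordConnected.uIcc_subset ⟨y, rfl⟩ ⟨x, rfl⟩
  have hlen : volume (uIcc (F y) (F x)) = 0 := measure_mono_null hsub hnull
  rw [Real.volume_interval, ENNReal.ofReal_eq_zero, abs_nonpos_iff, sub_eq_zero] at hlen
  exact hlen

theorem volume_image_eq_zero_of_hasDerivWithinAt_zero {F : ℝ → ℝ} {S : Set ℝ}
    (hF : ∀ x ∈ S, HasDerivWithinAt F 0 S x) : volume (F '' S) = 0 :=
  addHaar_image_eq_zero_of_det_fderivWithin_eq_zero volume
    (fun x hx ↦ (hF x hx).hasFDerivWithinAt) (fun _ _ ↦ by simp [ContinuousLinearMap.det])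

theorem eq_of_hasDerivWithinAt_zero_of_compl {F : ℝ → ℝ} {S : Set ℝ} (hF : Continuous F)
    (hS : ∀ x ∈ S, HasDerivWithinAt F 0 S x) (hSc : ∀ x ∈ Sᶜ, HasDerivWithinAt F 0 Sᶜ x)
    (x y : ℝ) : F x = F y := by
  refine eq_of_continuous_of_volume_range_eq_zero hF ?_ x y
  rw [← image_univ, ← union_compl_self S, image_union]
  exact measure_union_null (volume_image_eq_zero_of_hasDerivWithinAt_zero hS)
    (volume_image_eq_zero_of_hasDerivWithinAt_zero hSc)

theorem integral_eq_sub_of_hasDerivWithinAt_of_compl {F f : ℝ → ℝ} {S : Set ℝ}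
    (hF : Continuous F) (hf : Continuous f) (hS : ∀ x ∈ S, HasDerivWithinAt F (f x) S x)
    (hSc : ∀ x ∈ Sᶜ, HasDerivWithinAt F (f x) Sᶜ x) (x y : ℝ) :
    ∫ t in x..y, f t = F y - F x := by
  have hprim (u : ℝ) : HasDerivAt (fun v ↦ ∫ t in x..v, f t) (f u) u :=
    integral_hasDerivAt_right (hf.intervalIntegrable _ _)
      hf.aestronglyMeasurable.stronglyMeasurableAtFilter hf.continuousAt
  have hconst := eq_of_hasDerivWithinAt_zero_of_compl (F := fun v ↦ F v - ∫ t in x..v, f t)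
    (hF.sub (continuous_iff_continuousAt.2 fun u ↦ (hprim u).continuousAt))
    (fun u hu ↦ by simpa using (hS u hu).fun_sub (hprim u).hasDerivWithinAt)
    (fun u hu ↦ by simpa using (hSc u hu).fun_sub (hprim u).hasDerivWithinAt) x y
  simp only [integral_same, sub_zero] at hconst
  linarith

theorem hasDerivAt_mul_of_continuousAt_of_eq_zero {𝕜 : Type*} [NontriviallyNormedField 𝕜]
    {f g : 𝕜 → 𝕜} {f' x : 𝕜} (hg : ContinuousAt g x) (hf : HasDerivAt f f' x) (hfx : f x = 0) :
    HasDerivAt (fun y ↦ g y * f y) (g x * f') x := by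
  rw [hasDerivAt_iff_tendsto_slope] at hf ⊢
  refine ((hg.tendsto.mono_left nhdsWithin_le_nhds).mul hf).congr fun y ↦ ?_
  simp only [slope_def_field, hfx]
  ring

theorem differentiableAt_of_sub_eq_integral_deriv {f : ℝ → ℝ} {x : ℝ}
    (hf : ∀ y, f y - f x = ∫ t in x..y, deriv f t) (hcont : ContinuousAt (deriv f) x) :
    DifferentiableAt ℝ f x := by
  have hprim : HasDerivAt (fun y ↦ ∫ t in x..y, deriv f t) (deriv f x) x :=
    integral_hasDerivAt_right IntervalIntegrable.refl
      (stronglyMeasurable_deriv f).aestronglyMeasurable.stronglyMeasurableAtFilter hcont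
  simp only [← hf] at hprim
  simpa using (hprim.add_const (f x)).differentiableAt

end Calculus

section Periodic

theorem periodic_deriv {𝕜 E : Type*} [NontriviallyNormedField 𝕜] [NormedAddCommGroup E]
    [NormedSpace 𝕜 E] {f : 𝕜 → E} {T : 𝕜} (hper : Function.Periodic f T) :
    Function.Periodic (deriv f) T := fun x ↦ by
  rw [← deriv_comp_add_const, hper.funext]

variable {f : ℝ → ℝ} {T : ℝ}

theorem integral_sq_pos_of_periodic (hf : Continuous f) (hper : Function.Periodic f T)
    (hT : 0 < T) (hne : ∃ x, f x ≠ 0) : 0 < ∫ t in (0 : ℝ)..T, f t ^ 2 := by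
  obtain ⟨x, hx⟩ := hne
  obtain ⟨y, hy, hxy⟩ := hper.exists_mem_Ico₀ hT x
  exact integral_pos hT (hf.pow 2).continuousOn (fun _ _ ↦ sq_nonneg _)
    ⟨y, Ico_subset_Icc_self hy, by rw [← hxy]; positivity⟩

theorem exists_deriv_ne_zero (hf : Differentiable ℝ f) (hnc : ∃ x y, f x ≠ f y) :
    ∃ x, deriv f x ≠ 0 := by
  obtain ⟨x, y, hxy⟩ := hnc
  contrapose! hxy
  exact is_const_of_deriv_eq_zero hf hxy x y

theorem exists_deriv_ne_deriv_of_periodic (hf : Differentiable ℝ f)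
    (hper : Function.Periodic f T) (hT : 0 < T) (hnc : ∃ x y, f x ≠ f y) :
    ∃ x y, deriv f x ≠ deriv f y := by
  obtain ⟨x, hx⟩ := exists_deriv_ne_zero hf hnc
  obtain ⟨c, -, hc⟩ := exists_deriv_eq_zero hT hf.continuous.continuousOn hper.eq.symm
  exact ⟨x, c, hc ▸ hx⟩

end Periodic

section ThirdOrder

/-- The energy `φ'' φ' + (a / 2) φ'² + V(φ)` of the third-order equation
`φ''' + a φ'' + b φ' + V'(φ) = 0`, obtained by multiplying the equation by `φ'`. The term `b φ'²`
has no primitive in terms of `φ`, `φ'`, `φ''` and is left out: it is the source of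
`E' = φ''² - b φ'²`. -/
noncomputable def thirdOrderEnergy (a : ℝ) (V φ : ℝ → ℝ) (x : ℝ) : ℝ :=
  deriv (deriv φ) x * deriv φ x + a / 2 * deriv φ x ^ 2 + V (φ x)

variable {φ V g : ℝ → ℝ} {a b T x : ℝ}

theorem continuous_thirdOrderEnergy (hφ : ContDiff ℝ 2 φ) (hV : Continuous V) :
    Continuous (thirdOrderEnergy a V φ) := by
  have hφ₁ : Continuous (deriv φ) := hφ.continuous_deriv one_le_two
  have hφ₂ : Continuous (deriv (deriv φ)) := hφ.deriv'.continuous_deriv_one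
  exact ((hφ₂.mul hφ₁).add ((hφ₁.pow 2).const_mul (a / 2))).add (hV.comp hφ.continuous)

theorem periodic_thirdOrderEnergy (hper : Function.Periodic φ T) :
    Function.Periodic (thirdOrderEnergy a V φ) T := fun x ↦ by
  simp only [thirdOrderEnergy, hper x, periodic_deriv hper x,
    periodic_deriv (periodic_deriv hper) x]

theorem hasDerivAt_thirdOrderEnergy (hφ : DifferentiableAt ℝ φ x)
    (hφ' : DifferentiableAt ℝ (deriv φ) x) (hV : HasDerivAt V (g (φ x)) (φ x))
    (hode : HasDerivAt (deriv (deriv φ))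
      (-(a * deriv (deriv φ) x + b * deriv φ x + g (φ x))) x) :
    HasDerivAt (thirdOrderEnergy a V φ) (deriv (deriv φ) x ^ 2 - b * deriv φ x ^ 2) x := by
  have hE := ((hode.fun_mul hφ'.hasDerivAt).fun_add
    ((hφ'.hasDerivAt.fun_pow 2).const_mul (a / 2))).fun_add (hV.comp x hφ.hasDerivAt)
  refine hE.congr_deriv ?_
  push_cast
  ring

theorem hasDerivWithinAt_thirdOrderEnergy_zeros (hφ' : DifferentiableAt ℝ (deriv φ) x)
    (hφ'' : ContinuousAt (deriv (deriv φ)) x) (hx : φ x = 0) :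
    HasDerivWithinAt (thirdOrderEnergy a V φ) (deriv (deriv φ) x ^ 2 - b * deriv φ x ^ 2)
      {y | φ y = 0} x := by
  by_cases hacc : AccPt x (𝓟 {y | φ y = 0})
  · have hφ'x : deriv φ x = 0 :=
      deriv_zero_of_frequently_const (accPt_iff_frequently_nhdsNE.1 hacc)
    have hE := ((hasDerivAt_mul_of_continuousAt_of_eq_zero hφ'' hφ'.hasDerivAt hφ'x).fun_add
      ((hφ'.hasDerivAt.fun_pow 2).const_mul (a / 2))).add_const (V 0)
    refine (hE.hasDerivWithinAt.congr_deriv ?_).congr (fun y hy ↦ ?_) ?_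
    · simp only [hφ'x]
      ring
    · rw [thirdOrderEnergy, show φ y = 0 from hy]
    · rw [thirdOrderEnergy, hx]
  · exact hasDerivWithinAt_iff_hasFDerivWithinAt.2 (.of_not_accPt hacc)

theorem integral_sq_deriv_deriv_eq_of_periodic (hφ : ContDiff ℝ 2 φ)
    (hper : Function.Periodic φ T) (hV : Continuous V)
    (hVg : ∀ y, y ≠ 0 → HasDerivAt V (g y) y)
    (hode : ∀ x, φ x ≠ 0 → HasDerivAt (deriv (deriv φ))
      (-(a * deriv (deriv φ) x + b * deriv φ x + g (φ x))) x) :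
    ∫ t in (0 : ℝ)..T, deriv (deriv φ) t ^ 2 = b * ∫ t in (0 : ℝ)..T, deriv φ t ^ 2 := by
  have hφ₀ : Differentiable ℝ φ := hφ.differentiable two_ne_zero
  have hφ₁ : Differentiable ℝ (deriv φ) := hφ.deriv'.differentiable one_ne_zero
  have hφ₂ : Continuous (deriv (deriv φ)) := hφ.deriv'.continuous_deriv_one
  have hsq₁ : Continuous fun t ↦ b * deriv φ t ^ 2 := (hφ₁.continuous.pow 2).const_mul b
  have hsq₂ : Continuous fun t ↦ deriv (deriv φ) t ^ 2 := hφ₂.pow 2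
  have hbalance : ∫ t in (0 : ℝ)..T, (deriv (deriv φ) t ^ 2 - b * deriv φ t ^ 2) = 0 := by
    rw [integral_eq_sub_of_hasDerivWithinAt_of_compl (F := thirdOrderEnergy a V φ)
      (S := {y | φ y = 0}) (continuous_thirdOrderEnergy hφ hV) (hsq₂.fun_sub hsq₁)
      (fun x hx ↦ hasDerivWithinAt_thirdOrderEnergy_zeros (hφ₁ x) hφ₂.continuousAt hx)
      (fun x hx ↦ (hasDerivAt_thirdOrderEnergy (hφ₀ x) (hφ₁ x) (hVg _ hx)
        (hode x hx)).hasDerivWithinAt),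
      (periodic_thirdOrderEnergy hper).eq, sub_self]
  rwa [integral_sub (hsq₂.intervalIntegrable _ _) (hsq₁.intervalIntegrable _ _),
    intervalIntegral.integral_const_mul, sub_eq_zero] at hbalance

theorem pos_of_integral_sq_deriv_deriv_eq (hφ : ContDiff ℝ 2 φ)
    (hper : Function.Periodic φ T) (hT : 0 < T) (hnc : ∃ s t, φ s ≠ φ t)
    (hid : ∫ t in (0 : ℝ)..T, deriv (deriv φ) t ^ 2 = b * ∫ t in (0 : ℝ)..T, deriv φ t ^ 2) :
    0 < b := by
  have hφ₀ : Differentiable ℝ φ := hφ.differentiable two_ne_zero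
  have hφ₁ : Differentiable ℝ (deriv φ) := hφ.deriv'.differentiable one_ne_zero
  have hper' := periodic_deriv hper
  have hpos₁ : 0 < ∫ t in (0 : ℝ)..T, deriv φ t ^ 2 :=
    integral_sq_pos_of_periodic hφ₁.continuous hper' hT (exists_deriv_ne_zero hφ₀ hnc)
  have hpos₂ : 0 < ∫ t in (0 : ℝ)..T, deriv (deriv φ) t ^ 2 :=
    integral_sq_pos_of_periodic hφ.deriv'.continuous_deriv_one (periodic_deriv hper') hT
      (exists_deriv_ne_zero hφ₁ (exists_deriv_ne_deriv_of_periodic hφ₀ hper hT hnc))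
  exact (mul_pos_iff_of_pos_right hpos₁).1 (hid ▸ hpos₂)

end ThirdOrder

section ThinFilm

/-- The potential `V(y) = c/2 y² + |y|^(2-n) / (2-n)` of the nonlinearity `c y + |y|^(-n) y` in the
oscillatory-component equation. It is continuous for `n < 2`, but for `1 ≤ n` it is not
differentiable at `0`. -/
noncomputable def thinFilmPotential (n c y : ℝ) : ℝ :=
  c / 2 * y ^ 2 + |y| ^ (2 - n) / (2 - n)

variable {n : ℝ}

theorem continuous_thinFilmPotential (hn : n < 2) (c : ℝ) :
    Continuous (thinFilmPotential n c) := by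
  have hpow : Continuous fun y : ℝ ↦ |y| ^ (2 - n) :=
    continuous_abs.rpow_const fun _ ↦ Or.inr (by linarith)
  unfold thinFilmPotential
  fun_prop

theorem hasDerivAt_abs_rpow_of_ne_zero (p : ℝ) {y : ℝ} (hy : y ≠ 0) :
    HasDerivAt (fun z : ℝ ↦ |z| ^ p) (p * (|y| ^ (p - 2) * y)) y := by
  have h := (hasDerivAt_abs hy).rpow_const (p := p) (Or.inl (abs_ne_zero.2 hy))
  refine h.congr_deriv ?_
  have hexp : |y| ^ (p - 1) = |y| ^ (p - 2) * |y| := by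
    rw [← Real.rpow_add_one (abs_ne_zero.2 hy)]
    ring_nf
  have hsign : (SignType.sign y : ℝ) * |y| = y := sign_mul_abs y
  rw [hexp]
  linear_combination p * |y| ^ (p - 2) * hsign

theorem hasDerivAt_thinFilmPotential (hn : n ≠ 2) (c : ℝ) {y : ℝ} (hy : y ≠ 0) :
    HasDerivAt (thinFilmPotential n c) (c * y + |y| ^ (-n) * y) y := by
  have hV := ((hasDerivAt_pow 2 y).const_mul (c / 2)).fun_add
    ((hasDerivAt_abs_rpow_of_ne_zero (2 - n) hy).div_const (2 - n))
  refine hV.congr_deriv ?_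
  rw [mul_div_cancel_left₀ _ (sub_ne_zero.2 hn.symm), sub_sub_cancel_left]
  push_cast
  ring

theorem sq_mul_thinFilm_coeff (hn : n ≠ 0) :
    n ^ 2 * (3 * (3 / n) ^ 2 - 6 * (3 / n) + 2)
      = 2 * (9 / (3 + √3) - n) * (9 / (3 - √3) - n) := by
  have hsq : √3 ^ 2 = 3 := Real.sq_sqrt (by norm_num)
  have hlt : √3 < 3 := by nlinarith
  have hadd : 3 + √3 ≠ 0 := by positivity
  have hsub : 3 - √3 ≠ 0 := (sub_pos.2 hlt).ne'
  field_simp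
  linear_combination (18 * n - 27) * hsq

theorem thinFilm_coeff_pos_iff (hn₀ : n ≠ 0) (hn₂ : n < 9 / (3 - √3)) :
    0 < 3 * (3 / n) ^ 2 - 6 * (3 / n) + 2 ↔ n < 9 / (3 + √3) := by
  rw [← mul_pos_iff_of_pos_left (by positivity : 0 < n ^ 2), sq_mul_thinFilm_coeff hn₀,
    mul_pos_iff_of_pos_right (sub_pos.2 hn₂), mul_pos_iff_of_pos_left two_pos, sub_pos]

theorem differentiableAt_deriv_deriv_of_eq_integral {φ : ℝ → ℝ} {a b c x : ℝ}
    (hφ : ContDiff ℝ 2 φ)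
    (hAC : ∀ y, deriv (deriv φ) y - deriv (deriv φ) x = ∫ s in x..y, deriv (deriv (deriv φ)) s)
    (hode : ∀ s, φ s ≠ 0 → deriv (deriv (deriv φ)) s + a * deriv (deriv φ) s + b * deriv φ s
      + c * φ s + |φ s| ^ (-n) * φ s = 0) (hx : φ x ≠ 0) :
    DifferentiableAt ℝ (deriv (deriv φ)) x := by
  have hφ₀ : ContinuousAt φ x := hφ.continuous.continuousAt
  have hφ₁ : ContinuousAt (deriv φ) x := (hφ.continuous_deriv one_le_two).continuousAt
  have hφ₂ : ContinuousAt (deriv (deriv φ)) x := hφ.deriv'.continuous_deriv_one.continuousAt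
  have hpow : ContinuousAt (fun s ↦ |φ s| ^ (-n)) x :=
    hφ₀.abs.rpow_const (Or.inl (abs_ne_zero.2 hx))
  have hrhs : ContinuousAt (fun s ↦ -(a * deriv (deriv φ) s + b * deriv φ s + c * φ s
      + |φ s| ^ (-n) * φ s)) x := by
    fun_prop
  refine differentiableAt_of_sub_eq_integral_deriv hAC (hrhs.congr ?_)
  filter_upwards [hφ₀.eventually_ne hx] with s hs
  linear_combination -hode s hs

end ThinFilm

theorem periodic_orbit_energy_identity_general
    {n μ T : ℝ} (hn₀ : n ≠ 0) (hn₂ : n < 2) (hμ : μ = 3 / n) (hT : 0 < T)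
    {φ : ℝ → ℝ} (hreg : ContDiff ℝ 2 φ)
    (hdiff : ∀ s, φ s ≠ 0 → DifferentiableAt ℝ (deriv (deriv φ)) s)
    (hper : Function.Periodic φ T) (hnc : ∃ s t : ℝ, φ s ≠ φ t)
    (hode : ∀ s : ℝ, φ s ≠ 0 →
      deriv (deriv (deriv φ)) s + 3 * (μ - 1) * deriv (deriv φ) s
        + (3 * μ ^ 2 - 6 * μ + 2) * deriv φ s
        + μ * (μ - 1) * (μ - 2) * φ s + |φ s| ^ (-n) * φ s = 0) :
    (∫ s in (0:ℝ)..T, (deriv (deriv φ) s) ^ 2)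
        = (3 * μ ^ 2 - 6 * μ + 2) * ∫ s in (0:ℝ)..T, (deriv φ s) ^ 2 ∧
      0 < 3 * μ ^ 2 - 6 * μ + 2 ∧ n < 9 / (3 + Real.sqrt 3) := by
  have hid := integral_sq_deriv_deriv_eq_of_periodic (a := 3 * (μ - 1))
    (b := 3 * μ ^ 2 - 6 * μ + 2) hreg hper (continuous_thinFilmPotential hn₂ _)
    (fun _ ↦ hasDerivAt_thinFilmPotential hn₂.ne (μ * (μ - 1) * (μ - 2)))
    (fun s hs ↦ (hdiff s hs).hasDerivAt.congr_deriv (by linear_combination hode s hs))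
  have hpos := pos_of_integral_sq_deriv_deriv_eq hreg hper hT hnc hid
  have hn_upper : n < 9 / (3 - √3) := by
    have hlt : √3 < 3 := (Real.sqrt_lt' three_pos).2 (by norm_num)
    rw [lt_div_iff₀ (sub_pos.2 hlt)]
    nlinarith [Real.sqrt_nonneg 3]
  exact ⟨hid, hpos, (thinFilm_coeff_pos_iff hn₀ hn_upper).1 (hμ ▸ hpos)⟩

/-- Multiplying the oscillatory-component equation by `φ'` and integrating over a
period: for `n ∈ (0,2)`, `μ = 3/n`, any nonconstant `T`-periodic solution `φ` (of
class `C²` with `φ''` locally absolutely continuous and finitely many zeros per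
period) satisfies `∫₀ᵀ (φ'')² = (3μ²-6μ+2)∫₀ᵀ(φ')²`; in particular
`3μ²-6μ+2 > 0`, equivalently `n < 9/(3+√3)`. -/
theorem periodic_orbit_energy_identity
    (n μ T : ℝ) (hn : n ∈ Set.Ioo (0 : ℝ) 2) (hμ : μ = 3 / n) (hT : 0 < T)
    (φ : ℝ → ℝ) (hreg : ContDiff ℝ 2 φ)
    (hAC : ∀ a b : ℝ, deriv (deriv φ) b - deriv (deriv φ) a
      = ∫ s in a..b, deriv (deriv (deriv φ)) s)
    (hper : Function.Periodic φ T)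
    (hnc : ∃ s t : ℝ, φ s ≠ φ t)
    (hfin : Set.Finite {s ∈ Set.Ico 0 T | φ s = 0})
    (hode : ∀ s : ℝ, φ s ≠ 0 →
      deriv (deriv (deriv φ)) s + 3 * (μ - 1) * deriv (deriv φ) s
        + (3 * μ ^ 2 - 6 * μ + 2) * deriv φ s
        + μ * (μ - 1) * (μ - 2) * φ s + |φ s| ^ (-n) * φ s = 0) :
    (∫ s in (0:ℝ)..T, (deriv (deriv φ) s) ^ 2)
        = (3 * μ ^ 2 - 6 * μ + 2) * ∫ s in (0:ℝ)..T, (deriv φ s) ^ 2 ∧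
      0 < 3 * μ ^ 2 - 6 * μ + 2 ∧ n < 9 / (3 + Real.sqrt 3) :=
  periodic_orbit_energy_identity_general hn.1.ne' hn.2 hμ hT hreg
    (fun s ↦ differentiableAt_deriv_deriv_of_eq_integral hreg (hAC s) hode) hper hnc hode
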